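/- Let R = 𝔽_2[x]/(x^51 − 1), f_1 = x^25 + x^23 + x^22 + x^21 + x^20 + x^18 + x^16 + x^11 + x^10 + x^8 + x^7 + x^6 + x^5 + x^4 + x + 1, f_2 = (x^51 − 1)/(x^2 + x + 1), and g = x^20 + x^15 + x^14 + x^10 + x^9 + x^7 + 1, all regarded in R. Let C = {(c_1, c_1·g + c_2) : c_1 ∈ (f_1), c_2 ∈ (f_2)} ⊆ R^2, where (f_i) denotes the ideal of R generated by f_i. Then, under the coefficient identification R^2 ≅ 𝔽_2^{102}, C is an 𝔽_2-linear code of length 102 and dimension 28 in which every nonzero codeword has Hamming weight at least 28. -/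

import Mathlib

open Polynomial

/-- `R = F[x]/(x^m - 1)` -/
abbrev Rng (F : Type*) [Field F] (m : ℕ) : Type _ := AdjoinRoot (X ^ m - 1 : F[X])

theorem monicXm {F : Type*} [Field F] {m : ℕ} (hm : m ≠ 0) :
    (X ^ m - 1 : F[X]).Monic := by
  simpa using Polynomial.monic_X_pow_sub_C (1 : F) hm

/-- Hamming weight of an element of `R` under the coefficient identification
`R ≅ F^m`: the number of nonzero coefficients of the canonical representative
of degree `< m`. -/
noncomputable def wt {F : Type*} [Field F] {m : ℕ} (hm : m ≠ 0) (r : Rng F m) : ℕ :=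
  (AdjoinRoot.modByMonicHom (monicXm hm) r).support.card

/-- `R`-Hamming weight of a vector over `R`: the number of nonzero coordinates. -/
noncomputable def rwt {R : Type*} [Zero R] {l : ℕ} (v : Fin l → R) : ℕ :=
  Nat.card {j // v j ≠ 0}

noncomputable def f₁ : Rng (ZMod 2) 51 :=
  AdjoinRoot.mk _ (X ^ 25 + X ^ 23 + X ^ 22 + X ^ 21 + X ^ 20 + X ^ 18 + X ^ 16 +
    X ^ 11 + X ^ 10 + X ^ 8 + X ^ 7 + X ^ 6 + X ^ 5 + X ^ 4 + X + 1)

noncomputable def f₂ : Rng (ZMod 2) 51 :=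
  AdjoinRoot.mk _ ((X ^ 51 - 1) /ₘ (X ^ 2 + X + 1))

noncomputable def g : Rng (ZMod 2) 51 :=
  AdjoinRoot.mk _ (X ^ 20 + X ^ 15 + X ^ 14 + X ^ 10 + X ^ 9 + X ^ 7 + 1)

/-- The last `21` generators of the original code. -/
def tailA : List ℕ :=
  [4625393303298320107995201468800,
   4180184205683724861803403801344,
   3289766010454534369419808466432,
   1508929619996153384652617796608,
   3017859239992306769305235593216,
   965116079071698184423472050176,
   1930232158143396368846944100352,
   3860464316286792737693888200704,
   2650326231660670121200777265152,
   230050062408424888214555394048,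
   460100124816849776429110788096,
   920200249633699552858221576192,
   1840400499267399105716443152384,
   3680800998534798211432886304768,
   2290999596156681068678773473280,
   4581999192313362137357546946560,
   4093395983713808920528094756864,
   3116189566514702486869190377472,
   1161776732116489619551381618688,
   2173115314676963723222999629824,
   4346230629353927446445999259648]

/-- Generators of the words of the original code with a window of four zeros. -/
def rowsA : List ℕ :=
  1845824763140518852046149967664 ::
    3691649526281037704092299935328 ::
    2312696651649160053997600734400 :: tailA

/-- The last `21` generators of the swapped code. -/
def tailB : List ℕ :=
  [3270317811467974862412823591296,
   1470033222023034370638648046336,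
   2940066444046068741277296092672,
   809530487179222128367593049088,
   1619060974358444256735186098176,
   3238121948716888513470372196352,
   1405641496520861672753745256448,
   2811282993041723345507490512896,
   551963585170531336827981889536,
   1103927170341062673655963779072,
   2207854340682125347311927558144,
   4415708681364250694623855116288,
   3760814961815586035060711096320,
   2451027522718256715934423056384,
   4902055045436513431868846112768,
   4733507689960111509550693089280,
   4396412979007307664914387042304,
   3722223557101699975641774948352,
   2373844713290484597096550760448,
   2173115314676963723222999629824,
   4346230629353927446445999259648]

/-- Generators of the words of the swapped code with a window of four zeros. -/
def rowsB : List ℕ :=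
  4845566827232297792715227193136 ::
    4620531253551680231243455250016 ::
    4170460106190445108299911363776 :: tailB

/-- Strict evaluation of a natural number before passing it to a continuation. -/
def force {α : Type} (x : ℕ) (f : ℕ → α) : α :=
  Nat.rec (motive := fun _ => α) (f 0) (fun n _ => f n) (Nat.add x 1)

theorem force_eq {α : Type} (x : ℕ) (f : ℕ → α) : force x f = f x := rfl

/-- The mask with `2 ^ n` ones. -/
def ones (n : ℕ) : ℕ := Nat.sub (Nat.shiftLeft 1 (Nat.pow 2 n)) 1

/-- Truth table of coordinate `j` of the affine space `base + span rows`. -/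
def tt (base j : ℕ) : List ℕ → ℕ
  | [] => cond (Nat.testBit base j) 1 0
  | r :: rs => force (tt base j rs) fun t =>
      Nat.lor t (Nat.shiftLeft (cond (Nat.testBit r j) (Nat.xor t (ones rs.length)) t)
        (Nat.pow 2 rs.length))

/-- One level of carry-save addition of bit slices. -/
def csa {α : Type} : List ℕ → ℕ → List ℕ → (ℕ → List ℕ → α) → α
  | [], acc, cs, k => k acc cs
  | [x], acc, cs, k => force (Nat.xor acc x) fun s => force (Nat.land acc x) fun c =>
      k s (c :: cs)
  | x :: y :: l, acc, cs, k => force (Nat.xor acc x) fun t => force (Nat.xor t y) fun s =>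
      force (Nat.lor (Nat.land acc x) (Nat.land t y)) fun c => csa l s (c :: cs) k

/-- All truth tables for coordinates `< n`. -/
def tts {α : Type} (base : ℕ) (rows : List ℕ) : ℕ → List ℕ → (List ℕ → α) → α
  | 0, acc, k => k acc
  | n + 1, acc, k => force (tt base n rows) fun t => tts base rows n (t :: acc) k

/-- Lanes of the truth tables `l` whose count is at least `28`. -/
def ge28 {α : Type} (l : List ℕ) (k : ℕ → α) : α :=
  csa l 0 [] fun _ l1 => csa l1 0 [] fun _ l2 => csa l2 0 [] fun s2 l3 =>
  csa l3 0 [] fun s3 l4 => csa l4 0 [] fun s4 l5 => csa l5 0 [] fun s5 l6 =>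
  csa l6 0 [] fun s6 _ => k (Nat.lor s6 (Nat.lor s5 (Nat.land s4 (Nat.land s3 s2))))

/-- The verification of all codewords in `base + span rows`. -/
def check (base : ℕ) (rows : List ℕ) : Bool :=
  tts base rows 102 [] fun l => ge28 l fun s =>
    Nat.beq (Nat.lor s (cond (Nat.beq base 0) 1 0)) (ones rows.length)

/-- lane index of a message -/
def lane : List Bool → ℕ
  | [] => 0
  | b :: bs => lane bs + (if b then 2 ^ bs.length else 0)

theorem lane_lt (bs : List Bool) : lane bs < 2 ^ bs.length := by
  induction bs with
  | nil => simp [lane]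
  | cons b bs ih =>
    simp only [lane, List.length_cons, pow_succ]
    split <;> omega

/-- codeword associated with a message -/
def word (base : ℕ) : List ℕ → List Bool → ℕ
  | r :: rs, b :: bs => Nat.xor (word base rs bs) (cond b r 0)
  | _, _ => base

theorem word_of_lane_eq_zero (base : ℕ) (rows : List ℕ) (bs : List Bool) (h : lane bs = 0) :
    word base rows bs = base := by
  induction rows generalizing bs with
  | nil => cases bs <;> rfl
  | cons r rs ih =>
    cases bs with
    | nil => rfl
    | cons b bs =>
      simp only [lane] at h
      have hb : b = false := by
        cases b with
        | false => rfl
        | true => simp at h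
      subst hb
      have h' : lane bs = 0 := by omega
      change Nat.xor (word base rs bs) 0 = base
      rw [ih bs h']
      exact Nat.xor_zero base

theorem ones_eq (n : ℕ) : ones n = 2 ^ (2 ^ n) - 1 := by
  change (1 <<< (2 ^ n)) - 1 = _
  rw [Nat.one_shiftLeft]

theorem tt_lt (base j : ℕ) (rows : List ℕ) : tt base j rows < 2 ^ (2 ^ rows.length) := by
  induction rows with
  | nil =>
    simp only [tt]
    cases Nat.testBit base j <;> simp
  | cons r rs ih =>
    simp only [tt, force_eq]
    change (tt base j rs) ||| ((cond (Nat.testBit r j) ((tt base j rs) ^^^ (ones rs.length))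
      (tt base j rs)) <<< (2 ^ rs.length)) < _
    have h2 : 2 ^ (r :: rs).length = 2 ^ rs.length + 2 ^ rs.length := by
      simp [pow_succ]; ring
    rw [h2]
    apply Nat.or_lt_two_pow
    · exact lt_of_lt_of_le ih (Nat.pow_le_pow_right (by norm_num) (Nat.le_add_right _ _))
    · rw [Nat.shiftLeft_eq, pow_add]
      apply Nat.mul_lt_mul_of_pos_right _ (by positivity)
      cases Nat.testBit r j
      · exact ih
      · apply Nat.xor_lt_two_pow ih
        rw [ones_eq]
        have : 0 < 2 ^ 2 ^ rs.length := by positivity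
        omega

theorem testBit_tt (base j : ℕ) (rows : List ℕ) (bs : List Bool)
    (h : bs.length = rows.length) :
    (tt base j rows).testBit (lane bs) = (word base rows bs).testBit j := by
  induction rows generalizing bs with
  | nil =>
    cases bs with
    | nil =>
      simp only [tt, lane, word]
      cases Nat.testBit base j <;> simp
    | cons b bs => simp at h
  | cons r rs ih =>
    cases bs with
    | nil => simp at h
    | cons b bs =>
      have h' : bs.length = rs.length := by simpa using h
      have IH := ih bs h'
      have hl := lane_lt bs
      rw [h'] at hl
      have hT := tt_lt base j rs
      simp only [tt, force_eq]
      change ((tt base j rs) ||| ((cond (Nat.testBit r j) ((tt base j rs) ^^^ (ones rs.length))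
        (tt base j rs)) <<< (2 ^ rs.length))).testBit (lane (b :: bs)) =
        ((word base rs bs) ^^^ (cond b r 0)).testBit j
      rw [Nat.testBit_or, Nat.testBit_shiftLeft, Nat.testBit_xor, ← IH]
      cases b with
      | false =>
        have : ¬ (2 ^ rs.length ≤ lane bs) := by omega
        simp [lane, this]
      | true =>
        have hz : (tt base j rs).testBit (lane bs + 2 ^ rs.length) = false := by
          apply Nat.testBit_lt_two_pow
          exact lt_of_lt_of_le hT (Nat.pow_le_pow_right (by norm_num) (by omega))
        simp only [lane, h', if_true, hz, Bool.false_or, cond_true]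
        have h1 : lane bs + 2 ^ rs.length - 2 ^ rs.length = lane bs := by omega
        rw [h1]
        have h2 : 2 ^ rs.length ≤ lane bs + 2 ^ rs.length := by omega
        simp only [ge_iff_le, h2, decide_true, Bool.true_and]
        cases hr : Nat.testBit r j with
        | false => simp
        | true =>
          simp only [cond_true, Nat.testBit_xor, ones_eq, Nat.testBit_two_pow_sub_one, hl,
            decide_true]

/-- number of slices in `l` with a one in lane `i` -/
def cnt (i : ℕ) (l : List ℕ) : ℕ := (l.map fun x => (x.testBit i).toNat).sum

theorem cnt_cons (i x : ℕ) (l : List ℕ) : cnt i (x :: l) = (x.testBit i).toNat + cnt i l := by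
  simp [cnt]

theorem csa_spec {α : Type} (i : ℕ) (l : List ℕ) (acc : ℕ) (cs : List ℕ)
    (k : ℕ → List ℕ → α) :
    ∃ s c, csa l acc cs k = k s c ∧
      (s.testBit i).toNat + 2 * cnt i c = (acc.testBit i).toNat + cnt i l + 2 * cnt i cs := by
  induction l, acc, cs, k using csa.induct with
  | case1 acc cs k => exact ⟨acc, cs, rfl, by simp [cnt]⟩
  | case2 x acc cs k =>
    refine ⟨acc ^^^ x, (acc &&& x) :: cs, rfl, ?_⟩
    simp only [cnt_cons, Nat.testBit_xor, Nat.testBit_and]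
    have : cnt i [] = 0 := rfl
    cases acc.testBit i <;> cases x.testBit i <;> simp [this] <;> omega
  | case3 x y l acc cs k ih =>
    obtain ⟨s, c, h1, h2⟩ := ih (acc ^^^ x ^^^ y) ((acc &&& x) ||| ((acc ^^^ x) &&& y))
    refine ⟨s, c, ?_, ?_⟩
    · rw [← h1]; rfl
    · rw [h2]
      simp only [cnt_cons, Nat.testBit_xor, Nat.testBit_and, Nat.testBit_or]
      cases acc.testBit i <;> cases x.testBit i <;> cases y.testBit i <;> simp <;> omega

theorem ge28_spec {α : Type} (i : ℕ) (l : List ℕ) (k : ℕ → α) :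
    ∃ s, ge28 l k = k s ∧ (s.testBit i = true → 28 ≤ cnt i l) := by
  unfold ge28
  obtain ⟨s0, l1, h, e0⟩ := csa_spec i l 0 [] (fun _ l1 => csa l1 0 [] fun _ l2 =>
    csa l2 0 [] fun s2 l3 =>
    csa l3 0 [] fun s3 l4 => csa l4 0 [] fun s4 l5 => csa l5 0 [] fun s5 l6 =>
    csa l6 0 [] fun s6 _ => k (Nat.lor s6 (Nat.lor s5 (Nat.land s4 (Nat.land s3 s2)))))
  rw [h]; clear h
  obtain ⟨s1, l2, h, e1⟩ := csa_spec i l1 0 [] (fun _ l2 =>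
    csa l2 0 [] fun s2 l3 =>
    csa l3 0 [] fun s3 l4 => csa l4 0 [] fun s4 l5 => csa l5 0 [] fun s5 l6 =>
    csa l6 0 [] fun s6 _ => k (Nat.lor s6 (Nat.lor s5 (Nat.land s4 (Nat.land s3 s2)))))
  rw [h]; clear h
  obtain ⟨s2, l3, h, e2⟩ := csa_spec i l2 0 [] (fun s2 l3 =>
    csa l3 0 [] fun s3 l4 => csa l4 0 [] fun s4 l5 => csa l5 0 [] fun s5 l6 =>
    csa l6 0 [] fun s6 _ => k (Nat.lor s6 (Nat.lor s5 (Nat.land s4 (Nat.land s3 s2)))))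
  rw [h]; clear h
  obtain ⟨s3, l4, h, e3⟩ := csa_spec i l3 0 [] (fun s3 l4 =>
    csa l4 0 [] fun s4 l5 => csa l5 0 [] fun s5 l6 =>
    csa l6 0 [] fun s6 _ => k (Nat.lor s6 (Nat.lor s5 (Nat.land s4 (Nat.land s3 s2)))))
  rw [h]; clear h
  obtain ⟨s4, l5, h, e4⟩ := csa_spec i l4 0 [] (fun s4 l5 => csa l5 0 [] fun s5 l6 =>
    csa l6 0 [] fun s6 _ => k (Nat.lor s6 (Nat.lor s5 (Nat.land s4 (Nat.land s3 s2)))))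
  rw [h]; clear h
  obtain ⟨s5, l6, h, e5⟩ := csa_spec i l5 0 [] (fun s5 l6 =>
    csa l6 0 [] fun s6 _ => k (Nat.lor s6 (Nat.lor s5 (Nat.land s4 (Nat.land s3 s2)))))
  rw [h]; clear h
  obtain ⟨s6, l7, h, e6⟩ := csa_spec i l6 0 [] (fun s6 _ =>
    k (Nat.lor s6 (Nat.lor s5 (Nat.land s4 (Nat.land s3 s2)))))
  rw [h]; clear h
  refine ⟨_, rfl, ?_⟩
  intro hs
  change (s6 ||| (s5 ||| (s4 &&& (s3 &&& s2)))).testBit i = true at hs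
  simp only [Nat.testBit_or, Nat.testBit_and, Bool.or_eq_true, Bool.and_eq_true] at hs
  have hn : cnt i [] = 0 := rfl
  simp only [hn, Nat.zero_testBit, Bool.toNat_false] at e0 e1 e2 e3 e4 e5 e6
  rcases hs with h | h | ⟨h4, h3, h2⟩
  · rw [h, Bool.toNat_true] at e6; omega
  · rw [h, Bool.toNat_true] at e5; omega
  · rw [h4, Bool.toNat_true] at e4; rw [h3, Bool.toNat_true] at e3
    rw [h2, Bool.toNat_true] at e2; omega

theorem tts_eq {α : Type} (base : ℕ) (rows : List ℕ) (n : ℕ) (acc : List ℕ)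
    (k : List ℕ → α) :
    tts base rows n acc k = k (((List.range n).map fun j => tt base j rows) ++ acc) := by
  induction n generalizing acc with
  | zero => simp [tts]
  | succ n ih => simp [tts, force_eq, ih, List.range_succ]

/-- weight of the lowest `n` bits -/
def pop (n w : ℕ) : ℕ := ((List.range n).map fun j => (w.testBit j).toNat).sum

theorem check_spec (base : ℕ) (rows : List ℕ) (h : check base rows = true) (bs : List Bool)
    (hbs : bs.length = rows.length) :
    word base rows bs = 0 ∨ 28 ≤ pop 102 (word base rows bs) := by
  unfold check at h
  rw [tts_eq] at h
  obtain ⟨s, h1, h2⟩ := ge28_spec (lane bs) (((List.range 102).map fun j => tt base j rows) ++ [])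
    (fun s => Nat.beq (Nat.lor s (cond (Nat.beq base 0) 1 0)) (ones rows.length))
  rw [h1] at h
  have h3 := Nat.eq_of_beq_eq_true h
  change s ||| _ = _ at h3
  have hl := lane_lt bs
  rw [hbs] at hl
  have h4 := congrArg (fun n => Nat.testBit n (lane bs)) h3
  simp only [ones_eq, Nat.testBit_two_pow_sub_one, hl, decide_true, Nat.testBit_or,
    Bool.or_eq_true] at h4
  rcases h4 with h4 | h4
  · right
    have := h2 h4
    simpa [cnt, pop, Function.comp_def, testBit_tt base _ rows bs hbs] using this
  · left
    have hb : base = 0 := by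
      by_contra hb
      have : Nat.beq base 0 = false := by
        cases hh : Nat.beq base 0 with
        | false => rfl
        | true => exact absurd (Nat.eq_of_beq_eq_true hh) hb
      simp [this] at h4
    have hz : lane bs = 0 := by
      subst hb
      change Nat.testBit 1 (lane bs) = true at h4
      exact Nat.testBit_one_eq_true_iff_self_eq_zero.mp h4
    rw [word_of_lane_eq_zero _ _ _ hz, hb]

/-- All words of an affine space are zero or have weight at least `28`. -/
def Good (base : ℕ) (rows : List ℕ) : Prop :=
  ∀ bs : List Bool, bs.length = rows.length →
    word base rows bs = 0 ∨ 28 ≤ pop 102 (word base rows bs)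

theorem word_xor (base r : ℕ) (rows : List ℕ) (bs : List Bool) :
    word (base ^^^ r) rows bs = word base rows bs ^^^ r := by
  induction rows generalizing bs with
  | nil => cases bs <;> rfl
  | cons x rs ih =>
    cases bs with
    | nil => rfl
    | cons b bs =>
      change word (base ^^^ r) rs bs ^^^ _ = word base rs bs ^^^ _ ^^^ r
      rw [ih, Nat.xor_assoc, Nat.xor_assoc, Nat.xor_comm r]

theorem good_cons (base r : ℕ) (rows : List ℕ) (h0 : Good base rows)
    (h1 : Good (base ^^^ r) rows) : Good base (r :: rows) := by
  intro bs hbs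
  cases bs with
  | nil => simp at hbs
  | cons b bs =>
    have hlen : bs.length = rows.length := by simpa using hbs
    cases b with
    | false =>
      have e : word base (r :: rows) (false :: bs) = word base rows bs := Nat.xor_zero _
      rw [e]; exact h0 bs hlen
    | true =>
      have e : word base (r :: rows) (true :: bs) = word (base ^^^ r) rows bs := by
        rw [word_xor]; rfl
      rw [e]; exact h1 bs hlen

/-! ### Bit representation of elements of the ring -/

/-- The ring `𝔽₂[x]/(x⁵¹ - 1)`. -/
abbrev R51 : Type := Rng (ZMod 2) 51

/-- The class of `x`. -/
noncomputable def xi : R51 := AdjoinRoot.root _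

/-- The polynomial whose coefficients are the lowest `51` bits of `n`. -/
noncomputable def pb (n : ℕ) : (ZMod 2)[X] :=
  ∑ j ∈ Finset.range 51, if n.testBit j then X ^ j else 0

/-- The ring element whose coefficients are the lowest `51` bits of `n`. -/
noncomputable def ob (n : ℕ) : R51 := AdjoinRoot.mk _ (pb n)

/-- The representative of degree `< 51`. -/
noncomputable def rep (r : R51) : (ZMod 2)[X] :=
  AdjoinRoot.modByMonicHom (monicXm (by norm_num : (51 : ℕ) ≠ 0)) r

theorem coeff_pb (n k : ℕ) : (pb n).coeff k = if k < 51 ∧ n.testBit k then 1 else 0 := by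
  unfold pb
  rw [Polynomial.finsetSum_coeff]
  have : ∀ j ∈ Finset.range 51, ((if n.testBit j then X ^ j else 0 : (ZMod 2)[X])).coeff k =
      if k = j then (if n.testBit k then 1 else 0) else 0 := by
    intro j _
    by_cases hk : k = j
    · subst hk; split <;> simp
    · split <;> simp [Polynomial.coeff_X_pow, hk]
  rw [Finset.sum_congr rfl this, Finset.sum_ite_eq]
  by_cases h : k < 51 <;> simp [h]

theorem degree_lt_iff51 (p : (ZMod 2)[X]) : p.degree < 51 ↔ ∀ k, 51 ≤ k → p.coeff k = 0 :=
  Polynomial.degree_lt_iff_coeff_zero p 51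

theorem degree_pb (n : ℕ) : (pb n).degree < 51 := by
  rw [degree_lt_iff51]
  intro k hk
  rw [coeff_pb, if_neg]
  omega

theorem degree_mod : (X ^ 51 - 1 : (ZMod 2)[X]).degree = 51 := by
  simpa using Polynomial.degree_X_pow_sub_C (by norm_num : 0 < 51) (1 : ZMod 2)

theorem rep_mk_of_lt (p : (ZMod 2)[X]) (h : p.degree < 51) :
    rep (AdjoinRoot.mk _ p) = p := by
  unfold rep
  rw [AdjoinRoot.modByMonicHom_mk, Polynomial.modByMonic_eq_self_iff (monicXm (by norm_num)),
    degree_mod]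
  exact h

theorem mk_rep (r : R51) : AdjoinRoot.mk _ (rep r) = r :=
  AdjoinRoot.mk_leftInverse (monicXm (by norm_num)) r

theorem degree_rep (r : R51) : (rep r).degree < 51 := by
  obtain ⟨p, rfl⟩ := AdjoinRoot.mk_surjective r
  unfold rep
  rw [AdjoinRoot.modByMonicHom_mk, ← degree_mod]
  exact Polynomial.degree_modByMonic_lt _ (monicXm (by norm_num))

theorem rep_ob (n : ℕ) : rep (ob n) = pb n := rep_mk_of_lt _ (degree_pb n)

theorem zmod2_ne (a : ZMod 2) : a = if a ≠ 0 then 1 else 0 := by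
  revert a; decide

theorem ob_surj (r : R51) : ∃ n, r = ob n := by
  refine ⟨Nat.ofBits (fun j : Fin 51 => decide ((rep r).coeff j ≠ 0)), ?_⟩
  rw [← mk_rep r]
  unfold ob
  congr 1
  ext k
  rw [coeff_pb, mk_rep]
  by_cases hk : k < 51
  · rw [Nat.testBit_ofBits_lt _ _ hk]
    simp only [hk, true_and, decide_eq_true_eq]
    exact zmod2_ne _
  · rw [if_neg (by tauto)]
    exact (degree_lt_iff51 _).1 (degree_rep r) k (by omega)

theorem pb_xor (a b : ℕ) : pb (a ^^^ b) = pb a + pb b := by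
  ext k
  rw [Polynomial.coeff_add, coeff_pb, coeff_pb, coeff_pb, Nat.testBit_xor]
  by_cases hk : k < 51
  · cases a.testBit k <;> cases b.testBit k <;> simp [hk]
    decide
  · simp [hk]

theorem ob_xor (a b : ℕ) : ob (a ^^^ b) = ob a + ob b := by
  unfold ob
  rw [pb_xor, map_add]

theorem ob_zero : ob 0 = 0 := by
  unfold ob pb
  simp

theorem pb_mod (a : ℕ) : pb (a % 2 ^ 51) = pb a := by
  ext k
  rw [coeff_pb, coeff_pb, Nat.testBit_mod_two_pow]
  by_cases hk : k < 51 <;> simp [hk]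

theorem ob_mod (a : ℕ) : ob (a % 2 ^ 51) = ob a :=
  congrArg (AdjoinRoot.mk _) (pb_mod a)

/-- cyclic shift -/
def rot (n : ℕ) : ℕ := ((n <<< 1) % 2 ^ 51) ^^^ ((n >>> 50) % 2)

theorem testBit_rot_zero (n : ℕ) : (rot n).testBit 0 = n.testBit 50 := by
  unfold rot
  have e : (n >>> 50) % 2 = (n >>> 50) % 2 ^ 1 := by norm_num
  rw [e]
  simp only [Nat.testBit_xor, Nat.testBit_mod_two_pow, Nat.testBit_shiftLeft,
    Nat.testBit_shiftRight]
  simp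

theorem testBit_rot_succ (n j : ℕ) (hj : j < 50) : (rot n).testBit (j + 1) = n.testBit j := by
  unfold rot
  have e : (n >>> 50) % 2 = (n >>> 50) % 2 ^ 1 := by norm_num
  rw [e]
  simp only [Nat.testBit_xor, Nat.testBit_mod_two_pow, Nat.testBit_shiftLeft,
    Nat.testBit_shiftRight]
  have h : j + 1 < 51 := by omega
  simp [h]

theorem xi_pow_51 : xi ^ 51 = 1 := by
  have h : AdjoinRoot.mk (X ^ 51 - 1 : (ZMod 2)[X]) (X ^ 51 - 1) = 0 := AdjoinRoot.mk_self
  rw [map_sub, map_pow, map_one, AdjoinRoot.mk_X] at h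
  exact sub_eq_zero.1 h

theorem mk_X_pow (k : ℕ) : AdjoinRoot.mk (X ^ 51 - 1 : (ZMod 2)[X]) (X ^ k) = xi ^ k := by
  rw [map_pow, AdjoinRoot.mk_X]; rfl

theorem ob_eq_sum (n : ℕ) :
    ob n = ∑ j ∈ Finset.range 51, if n.testBit j then xi ^ j else 0 := by
  unfold ob pb
  rw [map_sum]
  refine Finset.sum_congr rfl fun j _ => ?_
  split
  · exact mk_X_pow j
  · exact map_zero _

theorem sum_shift (f h : ℕ → R51) (h0 : f 0 = h 50) (hs : ∀ j < 50, f (j + 1) = h j) :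
    ∑ j ∈ Finset.range 51, f j = ∑ j ∈ Finset.range 51, h j := by
  have e1 := Finset.sum_range_succ' f 50
  have e2 := Finset.sum_range_succ h 50
  have e3 : ∑ j ∈ Finset.range 50, f (j + 1) = ∑ j ∈ Finset.range 50, h j :=
    Finset.sum_congr rfl fun j hj => hs j (Finset.mem_range.1 hj)
  exact e1.trans ((congrArg₂ (· + ·) e3 h0).trans e2.symm)

theorem ob_rot (n : ℕ) : ob (rot n) = xi * ob n := by
  rw [ob_eq_sum, ob_eq_sum, Finset.mul_sum]
  apply sum_shift
  · rw [testBit_rot_zero]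
    split
    · rw [← pow_succ', xi_pow_51, pow_zero]
    · rw [mul_zero]
  · intro j hj
    rw [testBit_rot_succ n j hj]
    split
    · rw [pow_succ']
    · rw [mul_zero]

/-- iterated cyclic shift -/
def rotn : ℕ → ℕ → ℕ
  | 0, n => n
  | k + 1, n => rot (rotn k n)

theorem ob_rotn (k n : ℕ) : ob (rotn k n) = xi ^ k * ob n := by
  induction k with
  | zero => simp [rotn]
  | succ k ih => rw [rotn, ob_rot, ih, pow_succ' xi k, mul_assoc]

/-- partial products -/
def mulaux (a b : ℕ) : ℕ → ℕ
  | 0 => 0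
  | k + 1 => mulaux a b k ^^^ (if b.testBit k then rotn k a else 0)

/-- multiplication in the ring, on bits -/
def mulb (a b : ℕ) : ℕ := mulaux a b 51

theorem ob_mulaux (a b k : ℕ) : ob (mulaux a b k) =
    (∑ j ∈ Finset.range k, if b.testBit j then xi ^ j else 0) * ob a := by
  induction k with
  | zero => simp [mulaux, ob_zero]
  | succ k ih =>
    rw [mulaux, ob_xor, ih, Finset.sum_range_succ, add_mul]
    have e : ob (if b.testBit k then rotn k a else 0) =
        (if b.testBit k then xi ^ k else 0) * ob a := by
      split
      · exact ob_rotn k a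
      · rw [ob_zero, zero_mul]
    rw [e]

theorem ob_mulb (a b : ℕ) : ob (mulb a b) = ob a * ob b := by
  rw [mulb, ob_mulaux, ← ob_eq_sum, mul_comm]

/-! ### Weights -/

/-- coefficients, indexed cyclically -/
noncomputable def co (r : R51) (j : ZMod 51) : ZMod 2 := (rep r).coeff j.val

theorem co_ob (n : ℕ) (j : ZMod 51) :
    co (ob n) j = if n.testBit j.val then 1 else 0 := by
  unfold co
  rw [rep_ob, coeff_pb]
  simp [ZMod.val_lt j]

theorem wt_eq_rep (r : R51) (h : (51 : ℕ) ≠ 0) : wt h r = (rep r).support.card := rfl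

theorem wt_eq_card (r : R51) (h : (51 : ℕ) ≠ 0) :
    wt h r = (Finset.univ.filter fun j : ZMod 51 => co r j ≠ 0).card := by
  rw [wt_eq_rep]
  symm
  refine Finset.card_bij (fun j _ => j.val) ?_ ?_ ?_
  · intro j hj
    rw [Polynomial.mem_support_iff]
    exact (Finset.mem_filter.1 hj).2
  · intro a _ b _ hab
    exact ZMod.val_injective 51 hab
  · intro k hk
    rw [Polynomial.mem_support_iff] at hk
    have hk' : k < 51 := by
      by_contra hlt
      exact hk ((degree_lt_iff51 _).1 (degree_rep r) k (by omega))
    have hv : ((k : ZMod 51)).val = k := ZMod.val_cast_of_lt hk'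
    refine ⟨(k : ZMod 51), Finset.mem_filter.2 ⟨Finset.mem_univ _, ?_⟩, hv⟩
    unfold co
    rwa [hv]

theorem pop_eq_sum (n w : ℕ) : pop n w = ∑ j ∈ Finset.range n, (w.testBit j).toNat := rfl

theorem wt_ob (n : ℕ) (h : (51 : ℕ) ≠ 0) : wt h (ob n) = pop 51 n := by
  rw [wt_eq_rep, rep_ob, pop_eq_sum]
  have e : (pb n).support = (Finset.range 51).filter fun j => n.testBit j = true := by
    ext k
    rw [Polynomial.mem_support_iff, coeff_pb, Finset.mem_filter, Finset.mem_range]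
    by_cases hk : k < 51 ∧ n.testBit k = true <;> simp [hk]
  rw [e, Finset.card_filter]
  refine Finset.sum_congr rfl fun j _ => ?_
  cases n.testBit j <;> simp

theorem co_xi_mul (r : R51) (j : ZMod 51) : co (xi * r) (j + 1) = co r j := by
  obtain ⟨n, rfl⟩ := ob_surj r
  rw [← ob_rot, co_ob, co_ob]
  have hlt : j.val < 51 := ZMod.val_lt j
  have hv : (j + 1).val = (j.val + 1) % 51 := by
    rw [ZMod.val_add]; rfl
  by_cases hj : j.val < 50
  · have e : (j + 1).val = j.val + 1 := by omega
    rw [e, testBit_rot_succ n _ hj]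
  · have hj' : j.val = 50 := by omega
    have e : (j + 1).val = 0 := by omega
    rw [e, testBit_rot_zero, hj']

theorem co_xi_pow_mul (k : ℕ) (r : R51) (j : ZMod 51) :
    co (xi ^ k * r) (j + (k : ZMod 51)) = co r j := by
  induction k with
  | zero => simp
  | succ k ih =>
    rw [pow_succ' xi k, mul_assoc, Nat.cast_succ, ← add_assoc, co_xi_mul, ih]

theorem wt_xi_mul (k : ℕ) (r : R51) (h : (51 : ℕ) ≠ 0) : wt h (xi ^ k * r) = wt h r := by
  rw [wt_eq_card, wt_eq_card]
  symm
  refine Finset.card_equiv (Equiv.addRight (k : ZMod 51)) ?_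
  intro j
  simp only [Finset.mem_filter, Finset.mem_univ, true_and, Equiv.coe_addRight, co_xi_pow_mul]

/-- A word of weight at most `12` has four cyclically consecutive zeros. -/
theorem exists_window (r : R51) (h : (51 : ℕ) ≠ 0) (hw : wt h r ≤ 12) :
    ∃ k : ℕ, ∀ t < 4, (rep (xi ^ k * r)).coeff t = 0 := by
  have key : ∃ i : ZMod 51, ∀ t < 4, co r (((t : ℕ) : ZMod 51) + i) = 0 := by
    by_contra hcon
    push Not at hcon
    rw [wt_eq_card] at hw
    set s := Finset.univ.filter fun j : ZMod 51 => co r j ≠ 0 with hs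
    have hsub : (Finset.univ : Finset (ZMod 51)) ⊆
        (Finset.range 4).biUnion fun t => s.image fun j => j - ((t : ℕ) : ZMod 51) := by
      intro i _
      obtain ⟨t, ht, hne⟩ := hcon i
      rw [Finset.mem_biUnion]
      refine ⟨t, Finset.mem_range.2 ht, Finset.mem_image.2 ⟨(t : ZMod 51) + i, ?_, ?_⟩⟩
      · rw [hs]; simpa using hne
      · abel
    have h1 := Finset.card_le_card hsub
    have h2 := Finset.card_biUnion_le_card_mul (Finset.range 4)
      (fun t => s.image fun j => j - ((t : ℕ) : ZMod 51)) 12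
      (fun t _ => Finset.card_image_le.trans hw)
    rw [Finset.card_univ, ZMod.card] at h1
    rw [Finset.card_range] at h2
    omega
  obtain ⟨i, hi⟩ := key
  refine ⟨(-i : ZMod 51).val, fun t ht => ?_⟩
  have h1 := co_xi_pow_mul (-i : ZMod 51).val r ((t : ZMod 51) + i)
  rw [hi t ht] at h1
  rw [ZMod.natCast_zmod_val, add_neg_cancel_right] at h1
  have e : ((t : ZMod 51)).val = t := ZMod.val_cast_of_lt (by omega)
  unfold co at h1
  rwa [e] at h1

/-- augmentation -/
noncomputable def aug : R51 →+* ZMod 2 :=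
  AdjoinRoot.lift (RingHom.id (ZMod 2)) 1 (by simp)

theorem aug_eq (r : R51) (h : (51 : ℕ) ≠ 0) : aug r = (wt h r : ZMod 2) := by
  rw [wt_eq_rep]
  conv_lhs => rw [← mk_rep r]
  unfold aug
  rw [AdjoinRoot.lift_mk, Polynomial.eval₂_eq_sum, Polynomial.sum_def, Finset.cast_card]
  refine Finset.sum_congr rfl fun k hk => ?_
  rw [Polynomial.mem_support_iff] at hk
  rw [zmod2_ne ((rep r).coeff k), if_pos hk]
  simp

/-! ### The constants of the code -/

/-- bits of `f₁` -/
def nF1 : ℕ := 49614323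
/-- bits of `f₂` -/
def nF2 : ℕ := 965057063007963
/-- bits of `g` -/
def nG : ℕ := 1099393
/-- bits of an inverse of `g` modulo `(x^51-1)/(f₁(x^2+x+1))` -/
def nGi : ℕ := 8421203
/-- bits of the check polynomial of `f₁` -/
def nH1 : ℕ := 94529999

theorem pb_F1 : pb nF1 = X ^ 25 + X ^ 23 + X ^ 22 + X ^ 21 + X ^ 20 + X ^ 18 + X ^ 16 +
    X ^ 11 + X ^ 10 + X ^ 8 + X ^ 7 + X ^ 6 + X ^ 5 + X ^ 4 + X + 1 := by
  simp [pb, nF1, Finset.sum_range_succ, Nat.testBit_eq_decide_div_mod_eq]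
  ring

theorem f₁_eq : f₁ = ob nF1 := by
  unfold f₁ ob
  rw [pb_F1]

theorem g_eq : g = ob nG := by
  unfold g ob
  refine congrArg _ ?_
  simp [pb, nG, Finset.sum_range_succ, Nat.testBit_eq_decide_div_mod_eq]
  ring

theorem monic7 : (X ^ 2 + X + 1 : (ZMod 2)[X]).Monic := by
  monicity!

theorem degree7 : (X ^ 2 + X + 1 : (ZMod 2)[X]).degree = 2 := by
  compute_degree!

theorem pb_F2 : pb nF2 = (X + 1) * ∑ i ∈ Finset.range 17, (X ^ 3) ^ i := by
  simp [pb, nF2, Finset.sum_range_succ, Nat.testBit_eq_decide_div_mod_eq]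
  ring

theorem two_eq : (2 : (ZMod 2)[X]) = 0 := CharTwo.two_eq_zero

theorem mul_F2 : (X ^ 2 + X + 1) * pb nF2 = X ^ 51 - 1 := by
  have h : (X ^ 51 - 1 : (ZMod 2)[X]) = (X ^ 3 - 1) * ∑ i ∈ Finset.range 17, (X ^ 3) ^ i := by
    rw [mul_geom_sum, ← pow_mul]
  rw [h, pb_F2]
  linear_combination ((X ^ 2 + X + 1) * ∑ i ∈ Finset.range 17, (X ^ 3 : (ZMod 2)[X]) ^ i) * two_eq

theorem f₂_eq : f₂ = ob nF2 := by
  unfold f₂ ob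
  refine congrArg _ ?_
  refine (Polynomial.div_modByMonic_unique (f := X ^ 51 - 1) (pb nF2) 0 monic7 ⟨?_, ?_⟩).1
  · rw [zero_add, mul_F2]
  · rw [degree7, Polynomial.degree_zero]
    exact WithBot.bot_lt_coe 2

theorem F2_mul7 : ob nF2 * AdjoinRoot.mk _ (X ^ 2 + X + 1) = 0 := by
  unfold ob
  rw [← map_mul, mul_comm, mul_F2, AdjoinRoot.mk_self]

theorem F1_mulH1 : ob nF1 * ob nH1 = 0 := by
  rw [← ob_mulb, show mulb nF1 nH1 = 0 by decide +kernel, ob_zero]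

theorem F1_dvd_F2 : ob nF2 = ob nF1 * ob 31510169 := by
  rw [← ob_mulb, show mulb nF1 31510169 = nF2 by decide +kernel]

theorem F1_G_Gi : ob nF1 * ob nG * ob nGi = ob nF1 + xi * ob nF2 := by
  rw [← ob_mulb, ← ob_mulb, ← ob_rot, ← ob_xor]
  exact congrArg ob (by decide +kernel)

theorem pb_H1 : pb nH1 = X ^ 26 + X ^ 24 + X ^ 23 + X ^ 21 + X ^ 17 + X ^ 14 + X ^ 13 + X ^ 11 +
    X ^ 8 + X ^ 7 + X ^ 6 + X ^ 3 + X ^ 2 + X + 1 := by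
  simp [pb, nH1, Finset.sum_range_succ, Nat.testBit_eq_decide_div_mod_eq]
  ring

theorem monicH1 : (pb nH1).Monic := by
  rw [pb_H1]; monicity!

theorem degreeH1 : (pb nH1).degree = 26 := by
  rw [pb_H1]; compute_degree!

theorem degreeF1 : (pb nF1).degree = 25 := by
  rw [pb_F1]; compute_degree!

theorem degreeF2 : (pb nF2).degree = 49 := by
  have h := congrArg Polynomial.degree mul_F2
  rw [Polynomial.degree_mul, degree7, degree_mod] at h
  rw [Polynomial.degree_eq_natDegree (by rintro h0; rw [h0] at h; simp at h)] at h ⊢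
  norm_cast at h ⊢
  omega

theorem mem_F1 (c : R51) : c ∈ Ideal.span {f₁} ↔
    ∃ U : (ZMod 2)[X], U.degree < 26 ∧ c = AdjoinRoot.mk _ U * ob nF1 := by
  rw [f₁_eq, Ideal.mem_span_singleton']
  constructor
  · rintro ⟨a, rfl⟩
    obtain ⟨p, rfl⟩ := AdjoinRoot.mk_surjective a
    refine ⟨p %ₘ pb nH1, ?_, ?_⟩
    · rw [← degreeH1]
      exact Polynomial.degree_modByMonic_lt _ monicH1
    · conv_lhs => rw [← Polynomial.modByMonic_add_div p (pb nH1), map_add, map_mul, add_mul]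
      have : AdjoinRoot.mk (X ^ 51 - 1 : (ZMod 2)[X]) (pb nH1) *
          AdjoinRoot.mk (X ^ 51 - 1) (p /ₘ pb nH1) * ob nF1 = 0 := by
        change ob nH1 * _ * ob nF1 = 0
        calc _ = (ob nF1 * ob nH1) * AdjoinRoot.mk (X ^ 51 - 1) (p /ₘ pb nH1) := by ring
          _ = 0 := by rw [F1_mulH1, zero_mul]
      rw [this, add_zero]
  · rintro ⟨U, _, rfl⟩
    exact ⟨_, rfl⟩

theorem mem_F2 (c : R51) : c ∈ Ideal.span {f₂} ↔
    ∃ S : (ZMod 2)[X], S.degree < 2 ∧ c = AdjoinRoot.mk _ S * ob nF2 := by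
  rw [f₂_eq, Ideal.mem_span_singleton']
  constructor
  · rintro ⟨a, rfl⟩
    obtain ⟨p, rfl⟩ := AdjoinRoot.mk_surjective a
    refine ⟨p %ₘ (X ^ 2 + X + 1), ?_, ?_⟩
    · rw [← degree7]
      exact Polynomial.degree_modByMonic_lt _ monic7
    · conv_lhs => rw [← Polynomial.modByMonic_add_div p (X ^ 2 + X + 1), map_add,
        map_mul, add_mul]
      have : AdjoinRoot.mk (X ^ 51 - 1 : (ZMod 2)[X]) (X ^ 2 + X + 1) *
          AdjoinRoot.mk (X ^ 51 - 1) (p /ₘ (X ^ 2 + X + 1)) * ob nF2 = 0 := by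
        calc _ = (ob nF2 * AdjoinRoot.mk _ (X ^ 2 + X + 1)) *
              AdjoinRoot.mk (X ^ 51 - 1) (p /ₘ (X ^ 2 + X + 1)) := by ring
          _ = 0 := by rw [F2_mul7, zero_mul]
      rw [this, add_zero]
  · rintro ⟨U, _, rfl⟩
    exact ⟨_, rfl⟩

/-! ### From the code to words of bits -/

/-- pair of ring elements described by `102` bits -/
noncomputable def pr (n : ℕ) : R51 × R51 := (ob n, ob (n >>> 51))

theorem pr_xor (a b : ℕ) : pr (a ^^^ b) = pr a + pr b := by
  unfold pr
  rw [Nat.shiftRight_xor_distrib, ob_xor, ob_xor, Prod.mk_add_mk]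

theorem pr_zero : pr 0 = 0 := by
  unfold pr
  rw [Nat.zero_shiftRight, ob_zero]; rfl

theorem exists_word (rows : List ℕ) (v : R51 × R51)
    (hv : v ∈ Submodule.span (ZMod 2) {x | ∃ r ∈ rows, x = pr r}) :
    ∃ bs : List Bool, bs.length = rows.length ∧ v = pr (word 0 rows bs) := by
  induction rows generalizing v with
  | nil =>
    have e : {x | ∃ r ∈ ([] : List ℕ), x = pr r} = (∅ : Set (R51 × R51)) := by
      ext x; simp
    rw [e, Submodule.span_empty, Submodule.mem_bot] at hv
    exact ⟨[], rfl, by rw [hv]; exact pr_zero.symm⟩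
  | cons r rs ih =>
    have e : {x | ∃ y ∈ r :: rs, x = pr y} = insert (pr r) {x | ∃ y ∈ rs, x = pr y} := by
      ext x; simp
    rw [e, Submodule.mem_span_insert] at hv
    obtain ⟨a, z, hz, rfl⟩ := hv
    obtain ⟨bs, hl, rfl⟩ := ih z hz
    refine ⟨decide (a ≠ 0) :: bs, by simp [hl], ?_⟩
    change _ = pr (word 0 rs bs ^^^ cond (decide (a ≠ 0)) r 0)
    rw [pr_xor, add_comm, zmod2_ne a]
    by_cases ha : a = 0
    · simp [ha, pr_zero]
    · simp [ha]

theorem pop_split (w : ℕ) : pop 102 w = pop 51 w + pop 51 (w >>> 51) := by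
  rw [pop_eq_sum, pop_eq_sum, pop_eq_sum]
  rw [Finset.sum_range_add (fun j => (w.testBit j).toNat) 51 51]
  simp only [Nat.testBit_shiftRight]

/-- The rows are those of the code defined by `gn`, restricted to a window of zeros. -/
def RowsOK (gn : ℕ) (rows : List ℕ) : Prop :=
  (∀ i < 22, ∃ r ∈ rows, r % 2 ^ 51 = rotn (4 + i) nF1 ∧
    r >>> 51 = mulb (rotn (4 + i) nF1) gn) ∧
  (∀ i < 2, ∃ r ∈ rows, r % 2 ^ 51 = 0 ∧ r >>> 51 = rotn i nF2)

theorem mk_eq_sum (U : (ZMod 2)[X]) (n : ℕ) (hn : 0 < n) (h : U.degree < n) :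
    AdjoinRoot.mk (X ^ 51 - 1 : (ZMod 2)[X]) U =
      ∑ i ∈ Finset.range n, U.coeff i • xi ^ i := by
  conv_lhs => rw [Polynomial.as_sum_range' U n (by
    by_cases h0 : U = 0
    · subst h0
      simpa using hn
    · exact (Polynomial.natDegree_lt_iff_degree_lt h0).2 h)]
  rw [map_sum]
  refine Finset.sum_congr rfl fun i _ => ?_
  rw [← mk_X_pow, ← Polynomial.smul_X_eq_monomial, AdjoinRoot.smul_mk]

theorem good_window (gn : ℕ) (rows : List ℕ) (hgood : Good 0 rows) (hr : RowsOK gn rows)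
    (h : (51 : ℕ) ≠ 0) (U S : (ZMod 2)[X]) (hU : U.degree < 22) (hS : S.degree < 2) (c b : R51)
    (hc : c = AdjoinRoot.mk _ (X ^ 4 * U) * ob nF1)
    (hb : b = c * ob gn + AdjoinRoot.mk _ S * ob nF2) :
    (c, b) = (0 : R51 × R51) ∨ 28 ≤ wt h c + wt h b := by
  have hmem : (c, b) ∈ Submodule.span (ZMod 2) {x | ∃ r ∈ rows, x = pr r} := by
    have e : (c, b) = ∑ i ∈ Finset.range 22, U.coeff i •
          ((xi ^ (4 + i) * ob nF1, xi ^ (4 + i) * ob nF1 * ob gn) : R51 × R51) +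
        ∑ i ∈ Finset.range 2, S.coeff i • ((0, xi ^ i * ob nF2) : R51 × R51) := by
      have hc' : c = ∑ i ∈ Finset.range 22, U.coeff i • (xi ^ (4 + i) * ob nF1) := by
        rw [hc, map_mul, mk_X_pow, mk_eq_sum U 22 (by norm_num) hU, Finset.mul_sum, Finset.sum_mul]
        refine Finset.sum_congr rfl fun i _ => ?_
        rw [mul_smul_comm, smul_mul_assoc, pow_add]
      apply Prod.ext
      · simp only [Prod.fst_add, Prod.fst_sum, Prod.smul_fst, smul_zero, Finset.sum_const_zero,
          add_zero]
        exact hc'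
      · simp only [Prod.snd_add, Prod.snd_sum, Prod.smul_snd]
        rw [hb, hc', Finset.sum_mul, mk_eq_sum S 2 (by norm_num) hS, Finset.sum_mul]
        simp only [smul_mul_assoc]
    rw [e]
    refine Submodule.add_mem _ (Submodule.sum_mem _ fun i hi => ?_)
      (Submodule.sum_mem _ fun i hi => ?_)
    · obtain ⟨r, hr1, hr2, hr3⟩ := hr.1 i (Finset.mem_range.1 hi)
      refine Submodule.smul_mem _ _ (Submodule.subset_span ⟨r, hr1, ?_⟩)
      unfold pr
      rw [← ob_mod r, hr2, hr3, ob_mulb, ob_rotn]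
    · obtain ⟨r, hr1, hr2, hr3⟩ := hr.2 i (Finset.mem_range.1 hi)
      refine Submodule.smul_mem _ _ (Submodule.subset_span ⟨r, hr1, ?_⟩)
      unfold pr
      rw [← ob_mod r, hr2, hr3, ob_rotn, ob_zero]
  obtain ⟨bs, hl, hw⟩ := exists_word rows _ hmem
  rcases hgood bs hl with h0 | h28
  · left
    rw [hw, h0, pr_zero]
  · right
    have h1 : c = ob (word 0 rows bs) := congrArg Prod.fst hw
    have h2 : b = ob (word 0 rows bs >>> 51) := congrArg Prod.snd hw
    rw [h1, h2, wt_ob, wt_ob, ← pop_split]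
    exact h28

theorem xi_pow_cancel (k : ℕ) (r : R51) (h : xi ^ k * r = 0) : r = 0 := by
  have : xi ^ (50 * k) * (xi ^ k * r) = r := by
    rw [← mul_assoc, ← pow_add, show 50 * k + k = 51 * k by ring, pow_mul xi 51 k, xi_pow_51,
      one_pow, one_mul]
  rw [← this, h, mul_zero]

theorem good_half (gn : ℕ) (rows : List ℕ) (hgood : Good 0 rows) (hr : RowsOK gn rows)
    (h : (51 : ℕ) ≠ 0) (c c₂ : R51) (hc : c ∈ Ideal.span {f₁}) (hc₂ : c₂ ∈ Ideal.span {f₂})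
    (hw : wt h c ≤ 12) :
    (c, c * ob gn + c₂) = (0 : R51 × R51) ∨ 28 ≤ wt h c + wt h (c * ob gn + c₂) := by
  obtain ⟨k, hk⟩ := exists_window c h hw
  obtain ⟨U, hU, hcU⟩ := (mem_F1 (xi ^ k * c)).1 (Ideal.mul_mem_left _ _ hc)
  obtain ⟨S, hS, hcS⟩ := (mem_F2 (xi ^ k * c₂)).1 (Ideal.mul_mem_left _ _ hc₂)
  have hrep : rep (xi ^ k * c) = U * pb nF1 := by
    rw [hcU]
    unfold ob
    rw [← map_mul]
    apply rep_mk_of_lt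
    rw [Polynomial.degree_mul, degreeF1]
    by_cases h0 : U = 0
    · rw [h0, Polynomial.degree_zero, WithBot.bot_add]
      exact WithBot.bot_lt_coe 51
    · rw [Polynomial.degree_eq_natDegree h0] at hU ⊢
      norm_cast at hU ⊢
      omega
  have hdvd : X ^ 4 ∣ U * pb nF1 := by
    rw [Polynomial.X_pow_dvd_iff]
    intro d hd
    rw [← hrep]
    exact hk d hd
  have hnd : ¬ (X : (ZMod 2)[X]) ∣ pb nF1 := by
    rw [Polynomial.X_dvd_iff, coeff_pb]
    simp [nF1, Nat.testBit_eq_decide_div_mod_eq]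
  obtain ⟨V, hV⟩ := Polynomial.prime_X.pow_dvd_of_dvd_mul_right 4 hnd hdvd
  have hVd : V.degree < 22 := by
    by_cases h0 : V = 0
    · rw [h0, Polynomial.degree_zero]
      exact WithBot.bot_lt_coe 22
    · rw [hV, Polynomial.degree_mul, Polynomial.degree_X_pow,
        Polynomial.degree_eq_natDegree h0] at hU
      rw [Polynomial.degree_eq_natDegree h0]
      norm_cast at hU ⊢
      omega
  have hmain := good_window gn rows hgood hr h V S hVd hS (xi ^ k * c)
    (xi ^ k * (c * ob gn + c₂)) (by rw [hcU, hV]) (by rw [mul_add, hcS, mul_assoc])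
  rcases hmain with h0 | h28
  · left
    have h1 : xi ^ k * c = 0 := congrArg Prod.fst h0
    have h2 : xi ^ k * (c * ob gn + c₂) = 0 := congrArg Prod.snd h0
    exact Prod.ext (xi_pow_cancel k _ h1) (xi_pow_cancel k _ h2)
  · right
    rwa [wt_xi_mul, wt_xi_mul] at h28

theorem even_of_mem (c : R51) (h : (51 : ℕ) ≠ 0) (hc : c ∈ Ideal.span {f₁}) :
    wt h c % 2 = 0 := by
  obtain ⟨U, _, rfl⟩ := (mem_F1 c).1 hc
  have h1 : aug (ob nF1) = 0 := by
    rw [aug_eq _ h, wt_ob]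
    decide +kernel
  have h2 := aug_eq (AdjoinRoot.mk _ U * ob nF1) h
  rw [map_mul, h1, mul_zero] at h2
  have := (ZMod.natCast_eq_zero_iff _ 2).1 h2.symm
  omega

theorem F2_sub_F1 (c : R51) (hc : c ∈ Ideal.span {f₂}) : c ∈ Ideal.span {f₁} := by
  rw [f₂_eq, Ideal.mem_span_singleton'] at hc
  rw [f₁_eq, Ideal.mem_span_singleton']
  obtain ⟨a, rfl⟩ := hc
  exact ⟨a * ob 31510169, by rw [F1_dvd_F2]; ring⟩

theorem weight_bound (hA : Good 0 rowsA) (hB : Good 0 rowsB) (hA' : RowsOK nG rowsA)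
    (hB' : RowsOK nGi rowsB) (h : (51 : ℕ) ≠ 0) (c₁ c₂ : R51) (h₁ : c₁ ∈ Ideal.span {f₁})
    (h₂ : c₂ ∈ Ideal.span {f₂}) (hne : (c₁, c₁ * g + c₂) ≠ (0 : R51 × R51)) :
    28 ≤ wt h c₁ + wt h (c₁ * g + c₂) := by
  have hb : c₁ * g + c₂ ∈ Ideal.span {f₁} :=
    Ideal.add_mem _ (Ideal.mul_mem_right _ _ h₁) (F2_sub_F1 _ h₂)
  have e1 := even_of_mem _ h h₁
  have e2 := even_of_mem _ h hb
  by_contra hlt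
  have hcase : wt h c₁ ≤ 12 ∨ wt h (c₁ * g + c₂) ≤ 12 := by omega
  rcases hcase with hw | hw
  · rcases good_half nG rowsA hA hA' h c₁ c₂ h₁ h₂ hw with h0 | h28
    · rw [← g_eq] at h0
      exact hne h0
    · rw [← g_eq] at h28
      exact hlt h28
  · obtain ⟨U, -, hU⟩ := (mem_F1 c₁).1 h₁
    set d : R51 := -(AdjoinRoot.mk _ U * xi * ob nF2 + c₂ * ob nGi) with hd
    have hdm : d ∈ Ideal.span {f₂} := by
      rw [hd]
      refine neg_mem (Ideal.add_mem _ ?_ (Ideal.mul_mem_right _ _ h₂))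
      rw [f₂_eq]
      exact Ideal.mul_mem_left _ _ (Ideal.mem_span_singleton_self _)
    have hcd : (c₁ * g + c₂) * ob nGi + d = c₁ := by
      rw [hd, g_eq]
      have := F1_G_Gi
      rw [hU]
      linear_combination (AdjoinRoot.mk _ U) * this
    rcases good_half nGi rowsB hB hB' h (c₁ * g + c₂) d hb hdm hw with h0 | h28
    · rw [hcd] at h0
      have z1 : c₁ * g + c₂ = 0 := congrArg Prod.fst h0
      have z2 : c₁ = 0 := congrArg Prod.snd h0
      exact hne (Prod.ext z2 z1)
    · rw [hcd] at h28
      omega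

/-! ### The code as a linear subspace -/

/-- The encoder. -/
noncomputable def enc : (Polynomial.degreeLT (ZMod 2) 26 × Polynomial.degreeLT (ZMod 2) 2)
    →ₗ[ZMod 2] R51 × R51 where
  toFun p := (AdjoinRoot.mk _ p.1.1 * ob nF1,
    AdjoinRoot.mk _ p.1.1 * ob nF1 * g + AdjoinRoot.mk _ p.2.1 * ob nF2)
  map_add' p q := by
    apply Prod.ext
    · simp only [Prod.fst_add, Submodule.coe_add, map_add]
      ring
    · simp only [Prod.fst_add, Prod.snd_add, Submodule.coe_add, map_add]
      ring
  map_smul' a p := by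
    apply Prod.ext
    · simp only [Prod.smul_fst, Submodule.coe_smul, ← AdjoinRoot.smul_mk, smul_mul_assoc,
        RingHom.id_apply]
    · simp only [Prod.smul_fst, Prod.smul_snd, Submodule.coe_smul, ← AdjoinRoot.smul_mk,
        smul_mul_assoc, RingHom.id_apply, smul_add]

theorem mk_mul_inj (U : (ZMod 2)[X]) (n m d : ℕ) (hU : U.degree < d) (hn : (pb n).degree = m)
    (hd : d + m ≤ 51) (h : AdjoinRoot.mk _ U * ob n = 0) : U = 0 := by
  by_contra h0
  have hdeg : (U * pb n).degree < 51 := by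
    rw [Polynomial.degree_mul, hn]
    rw [Polynomial.degree_eq_natDegree h0] at hU ⊢
    norm_cast at hU ⊢
    omega
  have h1 := rep_mk_of_lt _ hdeg
  rw [map_mul] at h1
  change rep (AdjoinRoot.mk _ U * ob n) = _ at h1
  rw [h] at h1
  unfold rep at h1
  rw [map_zero] at h1
  rcases mul_eq_zero.1 h1.symm with h2 | h2
  · exact h0 h2
  · rw [h2] at hn
    simp at hn

theorem enc_injective : Function.Injective enc := by
  rw [← LinearMap.ker_eq_bot, LinearMap.ker_eq_bot']
  rintro ⟨⟨U, hU⟩, ⟨S, hS⟩⟩ h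
  rw [Polynomial.mem_degreeLT] at hU hS
  have h1 : AdjoinRoot.mk _ U * ob nF1 = 0 := congrArg Prod.fst h
  have h2 : AdjoinRoot.mk _ U * ob nF1 * g + AdjoinRoot.mk _ S * ob nF2 = 0 :=
    congrArg Prod.snd h
  rw [h1, zero_mul, zero_add] at h2
  have u0 := mk_mul_inj U nF1 25 26 hU degreeF1 (by norm_num) h1
  have s0 := mk_mul_inj S nF2 49 2 hS degreeF2 (by norm_num) h2
  subst u0
  subst s0
  rfl

theorem finrank_degreeLT (n : ℕ) :
    Module.finrank (ZMod 2) (Polynomial.degreeLT (ZMod 2) n) = n := by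
  rw [(Polynomial.degreeLTEquiv (ZMod 2) n).finrank_eq]
  simp

instance finite_degreeLT (n : ℕ) : Module.Finite (ZMod 2) (Polynomial.degreeLT (ZMod 2) n) :=
  Module.Finite.equiv (Polynomial.degreeLTEquiv (ZMod 2) n).symm

theorem finrank_range_enc : Module.finrank (ZMod 2) (LinearMap.range enc) = 28 := by
  rw [LinearMap.finrank_range_of_inj enc_injective, Module.finrank_prod, finrank_degreeLT,
    finrank_degreeLT]

theorem range_enc : ((LinearMap.range enc : Submodule (ZMod 2) (R51 × R51)) : Set (R51 × R51)) =
    {v | ∃ c₁ ∈ Ideal.span {f₁}, ∃ c₂ ∈ Ideal.span {f₂}, v = (c₁, c₁ * g + c₂)} := by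
  ext v
  rw [SetLike.mem_coe, LinearMap.mem_range, Set.mem_ofPred_eq]
  constructor
  · rintro ⟨⟨⟨U, hU⟩, ⟨S, hS⟩⟩, rfl⟩
    rw [Polynomial.mem_degreeLT] at hU hS
    exact ⟨_, (mem_F1 _).2 ⟨U, hU, rfl⟩, _, (mem_F2 _).2 ⟨S, hS, rfl⟩, rfl⟩
  · rintro ⟨c₁, h₁, c₂, h₂, rfl⟩
    obtain ⟨U, hU, rfl⟩ := (mem_F1 _).1 h₁
    obtain ⟨S, hS, rfl⟩ := (mem_F2 _).1 h₂
    exact ⟨⟨⟨U, Polynomial.mem_degreeLT.2 hU⟩, ⟨S, Polynomial.mem_degreeLT.2 hS⟩⟩, rfl⟩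

/-! ### The computation -/

theorem rowsA_ok : RowsOK nG rowsA := by
  unfold RowsOK
  decide +kernel

theorem rowsB_ok : RowsOK nGi rowsB := by
  unfold RowsOK
  decide +kernel

theorem good_of_check (base : ℕ) (rows : List ℕ) (h : check base rows = true) : Good base rows :=
  fun bs hbs => check_spec base rows h bs hbs

theorem blockA0 : check (0)
    tailA = true := by decide +kernel

theorem blockA1 : check (0 ^^^ 2312696651649160053997600734400)
    tailA = true := by decide +kernel

theorem blockA2 : check (0 ^^^ 3691649526281037704092299935328)
    tailA = true := by decide +kernel

theorem blockA3 : check (0 ^^^ 3691649526281037704092299935328 ^^^ 2312696651649160053997600734400)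
    tailA = true := by decide +kernel

theorem blockA4 : check (0 ^^^ 1845824763140518852046149967664)
    tailA = true := by decide +kernel

theorem blockA5 : check (0 ^^^ 1845824763140518852046149967664 ^^^ 2312696651649160053997600734400)
    tailA = true := by decide +kernel

theorem blockA6 : check (0 ^^^ 1845824763140518852046149967664 ^^^ 3691649526281037704092299935328)
    tailA = true := by decide +kernel

theorem blockA7 : check (0 ^^^ 1845824763140518852046149967664 ^^^ 3691649526281037704092299935328 ^^^ 2312696651649160053997600734400)
    tailA = true := by decide +kernel

theorem goodA : Good 0 rowsA :=
  good_cons _ _ _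
    (good_cons _ _ _ (good_cons _ _ _ (good_of_check _ _ blockA0)
      (good_of_check _ _ blockA1))
      (good_cons _ _ _ (good_of_check _ _ blockA2)
      (good_of_check _ _ blockA3)))
    (good_cons _ _ _ (good_cons _ _ _ (good_of_check _ _ blockA4)
      (good_of_check _ _ blockA5))
      (good_cons _ _ _ (good_of_check _ _ blockA6)
      (good_of_check _ _ blockA7)))

theorem blockB0 : check (0)
    tailB = true := by decide +kernel

theorem blockB1 : check (0 ^^^ 4170460106190445108299911363776)
    tailB = true := by decide +kernel

theorem blockB2 : check (0 ^^^ 4620531253551680231243455250016)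
    tailB = true := by decide +kernel

theorem blockB3 : check (0 ^^^ 4620531253551680231243455250016 ^^^ 4170460106190445108299911363776)
    tailB = true := by decide +kernel

theorem blockB4 : check (0 ^^^ 4845566827232297792715227193136)
    tailB = true := by decide +kernel

theorem blockB5 : check (0 ^^^ 4845566827232297792715227193136 ^^^ 4170460106190445108299911363776)
    tailB = true := by decide +kernel

theorem blockB6 : check (0 ^^^ 4845566827232297792715227193136 ^^^ 4620531253551680231243455250016)
    tailB = true := by decide +kernel

theorem blockB7 : check (0 ^^^ 4845566827232297792715227193136 ^^^ 4620531253551680231243455250016 ^^^ 4170460106190445108299911363776)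
    tailB = true := by decide +kernel

theorem goodB : Good 0 rowsB :=
  good_cons _ _ _
    (good_cons _ _ _ (good_cons _ _ _ (good_of_check _ _ blockB0)
      (good_of_check _ _ blockB1))
      (good_cons _ _ _ (good_of_check _ _ blockB2)
      (good_of_check _ _ blockB3)))
    (good_cons _ _ _ (good_cons _ _ _ (good_of_check _ _ blockB4)
      (good_of_check _ _ blockB5))
      (good_cons _ _ _ (good_of_check _ _ blockB6)
      (good_of_check _ _ blockB7)))

/-- the code `𝒞₂ = {(c₁, c₁·g + c₂) : c₁ ∈ (f₁), c₂ ∈ (f₂)}` in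
`R² ≅ 𝔽₂¹⁰²` (with `R = 𝔽₂[x]/(x⁵¹-1)`) is an `𝔽₂`-linear code of length 102 and
dimension 28, and every nonzero codeword has Hamming weight at least 28. -/
theorem stmt7 :
    ∃ W : Submodule (ZMod 2) (Rng (ZMod 2) 51 × Rng (ZMod 2) 51),
      (W : Set (Rng (ZMod 2) 51 × Rng (ZMod 2) 51)) =
        {v | ∃ c₁ ∈ Ideal.span {f₁}, ∃ c₂ ∈ Ideal.span {f₂}, v = (c₁, c₁ * g + c₂)} ∧
      Module.finrank (ZMod 2) W = 28 ∧
      ∀ c₁ ∈ Ideal.span {f₁}, ∀ c₂ ∈ Ideal.span {f₂},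
        ((c₁, c₁ * g + c₂) : Rng (ZMod 2) 51 × Rng (ZMod 2) 51) ≠ 0 →
        28 ≤ wt (by norm_num) c₁ + wt (by norm_num) (c₁ * g + c₂) := by
  exact ⟨LinearMap.range enc, range_enc, finrank_range_enc, fun c₁ h₁ c₂ h₂ hne =>
    weight_bound goodA goodB rowsA_ok rowsB_ok (by norm_num) c₁ c₂ h₁ h₂ hne⟩
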